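/- arXiv:2106.11433 — 4 statements merged into one kernel-verified Lean document; each statement's English description precedes it below -/
import Mathlib

section
/- Let f : (0,1) → (0,1) be a strictly increasing bijection, b₀ ∈ (0,1) a prior belief, τ ∈ {1,…,t}, and K₁,…,K_t real numbers. For every subset A ⊆ {1,…,t} let b(A) be the quasi-Bayesian belief after processing the signals in A. If b_ret ∈ (0,1) is the belief after a retraction of observation τ, i.e. the unique solution of ℓ(f⁻¹(b_ret)) = ℓ(f⁻¹(b({1,…,t}))) − K_τ, then b_ret = b({1,…,t} \ {τ}). In words: for any quasi-Bayesian updating rule with a fixed f, updating from a verifying retraction of observation τ yields exactly the belief the agent would hold had the retracted observation never been observed (Proposition 1, first part). -/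
/-- Log-odds (logit) function `ℓ(p) = log (p / (1 - p))`. -/
noncomputable def logit (p : ℝ) : ℝ := Real.log (p / (1 - p))

theorem strictMonoOn_div_one_sub {𝕜 : Type*} [Field 𝕜] [LinearOrder 𝕜] [IsStrictOrderedRing 𝕜] :
    StrictMonoOn (fun p : 𝕜 ↦ p / (1 - p)) (Set.Iio 1) := by
  intro p hp q hq hpq
  rw [div_lt_div_iff₀ (sub_pos.2 hp) (sub_pos.2 hq)]
  linarith

theorem strictMonoOn_logit : StrictMonoOn logit (Set.Ioo 0 1) :=
  Real.strictMonoOn_log.comp (strictMonoOn_div_one_sub.mono Set.Ioo_subset_Iio_self)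
    fun _ hp ↦ div_pos hp.1 (sub_pos.2 hp.2)

/-- Here `φ` plays the role of `ℓ ∘ f⁻¹`, the coordinate in which signals act by translation,
and `x₀` is the coordinate of the prior. -/
theorem retraction_equals_deletion_quasiBayesian_general
    {ι P G : Type*} [DecidableEq ι] [AddCommGroup G]
    {φ : P → G} {s : Set P} (hφ : Set.InjOn φ s)
    {x₀ : G} {K : ι → G} {S : Finset ι} {τ : ι} (hτ : τ ∈ S)
    {b : Finset ι → P} (hb_mem : ∀ A ⊆ S, b A ∈ s)
    (hb : ∀ A ⊆ S, φ (b A) = x₀ + ∑ j ∈ A, K j)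
    {b_ret : P} (hret_mem : b_ret ∈ s) (hret : φ b_ret = φ (b S) - K τ) :
    b_ret = b (S \ {τ}) := by
  have hsub : S \ {τ} ⊆ S := Finset.sdiff_subset
  refine hφ hret_mem (hb_mem _ hsub) ?_
  calc
    φ b_ret = x₀ + ∑ j ∈ S, K j - K τ := by rw [hret, hb S subset_rfl]
    _ = x₀ + ∑ j ∈ S \ {τ}, K j := by
      rw [Finset.sdiff_singleton_eq_erase, Finset.sum_erase_eq_sub hτ, add_sub_assoc]
    _ = φ (b (S \ {τ})) := (hb _ hsub).symm

/-- **Proposition 1, first part.**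
For any quasi-Bayesian updating rule with a fixed strictly increasing bijection
`f : (0,1) → (0,1)` (with inverse `finv`), prior `b₀ ∈ (0,1)` and log-likelihoods
`K₁,…,K_t`, if `b A` denotes the quasi-Bayesian belief after processing the signals
in `A ⊆ {1,…,t}` (i.e. `ℓ(f⁻¹(b A)) = ℓ(f⁻¹(b₀)) + ∑_{j∈A} K j`), and `b_ret` is the
belief after a verifying retraction of observation `τ`
(i.e. `ℓ(f⁻¹(b_ret)) = ℓ(f⁻¹(b {1,…,t})) − K τ`), then
`b_ret = b ({1,…,t} \ {τ})`: the belief is exactly as if the retracted observation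
had never been observed. -/
theorem retraction_equals_deletion_quasiBayesian
    (t : ℕ) (f finv : ℝ → ℝ)
    (hf_bij : Set.BijOn f (Set.Ioo 0 1) (Set.Ioo 0 1))
    (hf_mono : StrictMonoOn f (Set.Ioo 0 1))
    (hinv : Set.InvOn finv f (Set.Ioo 0 1) (Set.Ioo 0 1))
    (hinv_maps : Set.MapsTo finv (Set.Ioo 0 1) (Set.Ioo 0 1))
    (b₀ : ℝ) (hb₀ : b₀ ∈ Set.Ioo (0:ℝ) 1)
    (τ : ℕ) (hτ : τ ∈ Finset.Icc 1 t)
    (K : ℕ → ℝ)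
    (b : Finset ℕ → ℝ)
    (hb_mem : ∀ A ⊆ Finset.Icc 1 t, b A ∈ Set.Ioo (0:ℝ) 1)
    (hb : ∀ A ⊆ Finset.Icc 1 t,
      logit (finv (b A)) = logit (finv b₀) + ∑ j ∈ A, K j)
    (b_ret : ℝ) (hret_mem : b_ret ∈ Set.Ioo (0:ℝ) 1)
    (hret : logit (finv b_ret) = logit (finv (b (Finset.Icc 1 t))) - K τ) :
    b_ret = b (Finset.Icc 1 t \ {τ}) :=
  retraction_equals_deletion_quasiBayesian_general
    (strictMonoOn_logit.injOn.comp hinv.2.injOn hinv_maps) hτ hb_mem hb hret_mem hret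
end

section
/- Compressed-history invariance: in the truth-or-noise model, the Bayesian posterior on the state depends on the history of observations only through the sum of the signals. Precisely, for realizations (σ₁,…,σ_t) ∈ {−1,1}^t and (σ'₁,…,σ'_{t'}) ∈ {−1,1}^{t'} (with possibly different lengths t and t', each model built with the same noise probability ν), if Σ_{j=1}^{t} σ_j = Σ_{k=1}^{t'} σ'_k then P(θ = 1 | s₁ = σ₁,…,s_t = σ_t) = P(θ = 1 | s₁ = σ'₁,…,s_{t'} = σ'_{t'}). -/
/-!
Let `p = 1 - ν / 2` be the probability that an observation equals the state. Given `θ`, the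
observations are independent, and each equals a given sign with probability `p` if that sign is `θ`
and `1 - p` if not. An observation `x = ±1` therefore multiplies the odds of `θ = 1` against
`θ = -1` by `(p / (1 - p)) ^ x = exp (x * logit p)`. The prior odds are `1`, so after the history
`σ` the log-odds are `(∑ j, σ j) * logit p`, and the posterior is the logistic sigmoid of this.
-/

open scoped BigOperators

/-- Sample space of the truth-or-noise model with `t` observations:
a state bit `θ` together with, for each period, a noise indicator bit `n_j`
and a noise-value bit `ε_j`. -/
abbrev Omega (t : ℕ) := Bool × (Fin t → Bool × Bool)

/-- Encode a bit as a sign in `{-1, 1}`. -/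
def toSign (x : Bool) : ℤ := if x then 1 else -1

/-- Atom weight of the product PMF realizing the truth-or-noise model:
`θ` is uniform on `{-1,1}`, the noise indicators `n_j` are i.i.d. Bernoulli(ν),
the noise values `ε_j` are i.i.d. uniform on `{-1,1}`, all mutually
independent. -/
noncomputable def weight {t : ℕ} (ν : ℝ) (ω : Omega t) : ℝ :=
  (1 / 2) * ∏ j : Fin t, ((if (ω.2 j).1 then ν else 1 - ν) * (1 / 2))

/-- Probability of an event in the truth-or-noise model. -/
noncomputable def prob {t : ℕ} (ν : ℝ) (A : Set (Omega t)) : ℝ :=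
  ∑ ω : Omega t, Set.indicator A (weight ν) ω

/-- Conditional probability `P(A | B)` in the truth-or-noise model. -/
noncomputable def condProb {t : ℕ} (ν : ℝ) (A B : Set (Omega t)) : ℝ :=
  prob ν (A ∩ B) / prob ν B

/-- The state `θ ∈ {-1, 1}`. -/
def stateVal {t : ℕ} (ω : Omega t) : ℤ := toSign ω.1

/-- The noise indicator `n_j` (`true` means observation `j` is noise). -/
def noiseVal {t : ℕ} (j : Fin t) (ω : Omega t) : Bool := (ω.2 j).1

/-- The observation `s_j = (1 - n_j)·θ + n_j·ε_j ∈ {-1, 1}`. -/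
def obsVal {t : ℕ} (j : Fin t) (ω : Omega t) : ℤ :=
  if (ω.2 j).1 then toSign (ω.2 j).2 else toSign ω.1

section

variable {t : ℕ} {ν : ℝ}

lemma prob_inter_add_prob_compl_inter (A B : Set (Omega t)) :
    prob ν (A ∩ B) + prob ν (Aᶜ ∩ B) = prob ν B := by
  have hdisj : Disjoint (A ∩ B) (Aᶜ ∩ B) :=
    disjoint_compl_right.mono Set.inter_subset_left Set.inter_subset_left
  calc prob ν (A ∩ B) + prob ν (Aᶜ ∩ B)
      = prob ν (A ∩ B ∪ Aᶜ ∩ B) := by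
        simp only [prob, Set.indicator_union_of_disjoint hdisj, Finset.sum_add_distrib]
    _ = prob ν B := by
        rw [← Set.union_inter_distrib_right, Set.union_compl_self, Set.univ_inter]

lemma condProb_eq_sigmoid_of_odds {A B : Set (Omega t)} {y : ℝ} (hB : prob ν (Aᶜ ∩ B) ≠ 0)
    (hodds : prob ν (A ∩ B) = Real.exp y * prob ν (Aᶜ ∩ B)) :
    condProb ν A B = Real.sigmoid y := by
  rw [condProb, ← prob_inter_add_prob_compl_inter A B, hodds, Real.sigmoid_def, Real.exp_neg]
  field_simp

/-- The probability of a realization `z = (n_j, ε_j)` of the noise in a single period. -/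
noncomputable def noiseWeight (ν : ℝ) (z : Bool × Bool) : ℝ :=
  (if z.1 then ν else 1 - ν) * (1 / 2)

lemma prob_state_eq_and_forall_noise_mem (b : Bool) (E : Fin t → Set (Bool × Bool)) :
    prob ν {ω : Omega t | ω.1 = b ∧ ∀ j, ω.2 j ∈ E j}
      = 1 / 2 * ∏ j, ∑ z, (E j).indicator (noiseWeight ν) z := by
  classical
  have hne : ∀ c ≠ b, ∑ f : Fin t → Bool × Bool,
      Set.indicator {ω : Omega t | ω.1 = b ∧ ∀ j, ω.2 j ∈ E j} (weight ν) (c, f) = 0 := by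
    intro c hc
    simp [hc]
  have heq : ∀ f : Fin t → Bool × Bool,
      Set.indicator {ω : Omega t | ω.1 = b ∧ ∀ j, ω.2 j ∈ E j} (weight ν) (b, f)
        = 1 / 2 * ∏ j, (E j).indicator (noiseWeight ν) (f j) := by
    intro f
    simp only [Set.indicator_apply, Set.mem_ofPred_eq, true_and, Fintype.prod_ite_zero, mul_ite,
      mul_zero]
    rfl
  rw [prob, Fintype.sum_prod_type, Fintype.sum_eq_single b hne, Fintype.prod_sum, Finset.mul_sum]
  exact Finset.sum_congr rfl fun f _ => heq f

/-- The likelihood `P(s_j = x | θ = b)` of a single observation `x = ±1`, in terms of the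
probability `p` that an observation equals the state. -/
noncomputable def likelihood (p : ℝ) (b : Bool) (x : ℤ) : ℝ :=
  if toSign b = x then p else 1 - p

lemma likelihood_pos {p : ℝ} (hp : p ∈ Set.Ioo 0 1) (b : Bool) (x : ℤ) :
    0 < likelihood p b x := by
  unfold likelihood
  split_ifs
  exacts [hp.1, sub_pos.2 hp.2]

lemma likelihood_true_eq_exp_mul {p : ℝ} (hp : p ∈ Set.Ioo 0 1) {x : ℤ} (hx : x = 1 ∨ x = -1) :
    likelihood p true x = Real.exp (x * logit p) * likelihood p false x := by
  have hq : 0 < 1 - p := sub_pos.2 hp.2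
  have hexp : Real.exp (logit p) = p / (1 - p) := Real.exp_log (div_pos hp.1 hq)
  rcases hx with rfl | rfl
  · change p = Real.exp ((1 : ℤ) * logit p) * (1 - p)
    rw [Int.cast_one, one_mul, hexp, div_mul_cancel₀ _ hq.ne']
  · change 1 - p = Real.exp ((-1 : ℤ) * logit p) * p
    rw [Int.cast_neg, Int.cast_one, neg_one_mul, Real.exp_neg, hexp, inv_div,
      div_mul_cancel₀ _ hp.1.ne']

lemma prod_likelihood_true_eq_exp_mul {ι : Type*} {p : ℝ} (hp : p ∈ Set.Ioo 0 1) (s : Finset ι)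
    {σ : ι → ℤ} (hσ : ∀ i ∈ s, σ i = 1 ∨ σ i = -1) :
    ∏ i ∈ s, likelihood p true (σ i)
      = Real.exp ((∑ i ∈ s, σ i : ℤ) * logit p) * ∏ i ∈ s, likelihood p false (σ i) := by
  rw [Int.cast_sum, Finset.sum_mul, Real.exp_sum, ← Finset.prod_mul_distrib]
  exact Finset.prod_congr rfl fun i hi => likelihood_true_eq_exp_mul hp (hσ i hi)

/-- The noise realizations `(n_j, ε_j)` under which the state `b` is observed as `x`. -/
def compatibleNoise (b : Bool) (x : ℤ) : Set (Bool × Bool) :=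
  {z | (if z.1 then toSign z.2 else toSign b) = x}

lemma sum_indicator_compatibleNoise (b : Bool) {x : ℤ} (hx : x = 1 ∨ x = -1) :
    ∑ z, (compatibleNoise b x).indicator (noiseWeight ν) z = likelihood (1 - ν / 2) b x := by
  classical
  have hnoise : ∑ e, (compatibleNoise b x).indicator (noiseWeight ν) (true, e) = ν / 2 := by
    rcases hx with rfl | rfl <;>
      simp [compatibleNoise, Set.indicator_apply, noiseWeight, toSign, div_eq_mul_inv]
  have htruth : ∑ e, (compatibleNoise b x).indicator (noiseWeight ν) (false, e)
      = if toSign b = x then 1 - ν else 0 := by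
    simp [compatibleNoise, Set.indicator_apply, noiseWeight, mul_left_comm (2 : ℝ)]
  rw [Fintype.sum_prod_type, Fintype.sum_bool, hnoise, htruth, likelihood]
  split_ifs <;> ring

lemma prob_state_eq_and_obs_eq (b : Bool) {σ : Fin t → ℤ} (hσ : ∀ j, σ j = 1 ∨ σ j = -1) :
    prob ν {ω : Omega t | ω.1 = b ∧ ∀ j, obsVal j ω = σ j}
      = 1 / 2 * ∏ j, likelihood (1 - ν / 2) b (σ j) := by
  have hevent : {ω : Omega t | ω.1 = b ∧ ∀ j, obsVal j ω = σ j}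
      = {ω | ω.1 = b ∧ ∀ j, ω.2 j ∈ compatibleNoise b (σ j)} := by
    ext ω
    refine and_congr_right fun hb => ?_
    simp only [obsVal, compatibleNoise, hb, Set.mem_ofPred_eq]
  simp only [hevent, prob_state_eq_and_forall_noise_mem, sum_indicator_compatibleNoise b (hσ _)]

lemma posterior_eq_sigmoid (hp : 1 - ν / 2 ∈ Set.Ioo 0 1) {σ : Fin t → ℤ}
    (hσ : ∀ j, σ j = 1 ∨ σ j = -1) :
    condProb ν {ω : Omega t | stateVal ω = 1} {ω : Omega t | ∀ j, obsVal j ω = σ j}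
      = Real.sigmoid ((∑ j, σ j : ℤ) * logit (1 - ν / 2)) := by
  have htrue : {ω : Omega t | stateVal ω = 1} = {ω | ω.1 = true} := by
    ext ω
    cases hb : ω.1 <;> simp [stateVal, toSign, hb]
  have hfalse : {ω : Omega t | stateVal ω = 1}ᶜ = {ω | ω.1 = false} := by
    ext ω
    simp [htrue]
  apply condProb_eq_sigmoid_of_odds
  · rw [hfalse, ← Set.ofPred_and, prob_state_eq_and_obs_eq false hσ]
    exact mul_ne_zero (by norm_num) (Finset.prod_pos fun j _ => likelihood_pos hp _ _).ne'
  · rw [hfalse, htrue, ← Set.ofPred_and, ← Set.ofPred_and,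
      prob_state_eq_and_obs_eq true hσ, prob_state_eq_and_obs_eq false hσ,
      prod_likelihood_true_eq_exp_mul hp Finset.univ fun j _ => hσ j, mul_left_comm]

end

/-- **Compressed-history invariance.** In the truth-or-noise model, the Bayesian
posterior on the state depends on the history of observations only through the
sum of the signals: for realizations `(σ₁,…,σ_t) ∈ {−1,1}^t` and
`(σ'₁,…,σ'_{t'}) ∈ {−1,1}^{t'}` (possibly of different lengths, with the same
noise probability `ν`), if `∑ σ_j = ∑ σ'_k` then the posteriors
`P(θ = 1 | history)` coincide. -/
theorem compressed_history_invariance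
    (t t' : ℕ) (ν : ℝ) (hν : ν ∈ Set.Ioo (0:ℝ) 1)
    (σ : Fin t → ℤ) (hσ : ∀ j, σ j = 1 ∨ σ j = -1)
    (σ' : Fin t' → ℤ) (hσ' : ∀ k, σ' k = 1 ∨ σ' k = -1)
    (hsum : ∑ j : Fin t, σ j = ∑ k : Fin t', σ' k) :
    condProb ν {ω : Omega t | stateVal ω = 1}
        {ω : Omega t | ∀ j : Fin t, obsVal j ω = σ j}
      = condProb ν {ω : Omega t' | stateVal ω = 1}
          {ω : Omega t' | ∀ k : Fin t', obsVal k ω = σ' k} := by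
  have hp : 1 - ν / 2 ∈ Set.Ioo 0 1 := ⟨by linarith [hν.2], by linarith [hν.1]⟩
  rw [posterior_eq_sigmoid hp hσ, posterior_eq_sigmoid hp hσ', hsum]
end

section
/- Verifying retractions are equivalent to deletion for a Bayesian: in the truth-or-noise model, for every realization (σ₁,…,σ_t) ∈ {−1,1}^t and every τ ∈ {1,…,t}, P(θ = 1 | s₁ = σ₁,…,s_t = σ_t, n_τ = 1) = P(θ = 1 | s_j = σ_j for all j ≠ τ). That is, conditioning additionally on the event that observation τ was noise yields exactly the posterior computed from the history with the retracted observation removed. -/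
open scoped BigOperators

/-!
Given `n_τ = 1`, the observation `s_τ` is the noise value `ε_τ`. So conditioning on the whole
history and on `n_τ = 1` amounts to conditioning on the history without `τ` and on
`(n_τ, ε_τ) = (1, σ_τ)`. The pair `(n_τ, ε_τ)` is independent of `θ` and of the other observations,
so this last event multiplies the numerator and the denominator of the posterior by the same factor
`ν / 2 > 0`.
-/

/-- The joint law of the noise indicator and the noise value of a single period. -/
noncomputable def periodWeight (ν : ℝ) (p : Bool × Bool) : ℝ :=
  (if p.1 then ν else 1 - ν) * (1 / 2)

/-- The event `A` does not involve the noise variables of period `τ`: it is decided by `θ` and the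
noise variables of the other periods. -/
def IgnoresPeriod {t : ℕ} (τ : Fin t) (A : Set (Omega t)) : Prop :=
  ∀ b, DependsOn (fun f => (b, f) ∈ A) {τ}ᶜ

section ProductWeights

variable {ι R : Type*} {α : ι → Type*} [Fintype ι] [DecidableEq ι] [∀ i, Fintype (α i)]
  [CommSemiring R]

theorem sum_mul_prod_eq_sum_piSplitAt (w : ∀ i, α i → R) (i : ι) (F : (∀ i, α i) → R) :
    ∑ f, F f * ∏ j, w j (f j)
      = ∑ r : ∀ j : {j // j ≠ i}, α j, ∑ x,
          F ((Equiv.piSplitAt i α).symm (x, r)) * (w i x * ∏ j : {j // j ≠ i}, w j (r j)) := by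
  rw [← (Equiv.piSplitAt i α).symm.sum_comp, Fintype.sum_prod_type_right]
  refine Fintype.sum_congr _ _ fun r => Fintype.sum_congr _ _ fun x => ?_
  have hprod : ∏ j : {j // j ≠ i}, w j ((Equiv.piSplitAt i α).symm (x, r) j)
      = ∏ j : {j // j ≠ i}, w j (r j) :=
    Fintype.prod_congr _ _ fun j => by simp [j.2]
  rw [Fintype.prod_eq_mul_prod_subtype_ne _ i, hprod]
  simp

/-- Independence of coordinate `i` from the others under a product law. -/
theorem sum_mul_mul_prod_of_dependsOn {w : ∀ i, α i → R} {i : ι} (hw : ∑ x, w i x = 1)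
    {g : (∀ i, α i) → R} (hg : DependsOn g {i}ᶜ) (h : α i → R) :
    ∑ f, h (f i) * g f * ∏ j, w j (f j)
      = (∑ x, h x * w i x) * ∑ f, g f * ∏ j, w j (f j) := by
  rw [sum_mul_prod_eq_sum_piSplitAt w i, sum_mul_prod_eq_sum_piSplitAt w i, Finset.mul_sum]
  refine Fintype.sum_congr _ _ fun r => ?_
  rw [Finset.sum_mul]
  refine Fintype.sum_congr _ _ fun x => ?_
  set P := ∏ j : {j // j ≠ i}, w j (r j)
  have hconst (y : α i) :
      g ((Equiv.piSplitAt i α).symm (y, r)) = g ((Equiv.piSplitAt i α).symm (x, r)) :=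
    hg fun j hj => by simp [show j ≠ i from hj]
  have hsum : ∑ y, g ((Equiv.piSplitAt i α).symm (y, r)) * (w i y * P)
      = g ((Equiv.piSplitAt i α).symm (x, r)) * P := by
    simp only [hconst, ← Finset.mul_sum, ← Finset.sum_mul, hw, one_mul]
  rw [hsum]
  simp only [Equiv.piSplitAt_symm_apply, dite_true]
  ring

end ProductWeights

theorem sum_periodWeight (ν : ℝ) : ∑ p, periodWeight ν p = 1 := by
  simp only [periodWeight, Fintype.sum_prod_type, Fintype.sum_bool, if_true,
    Bool.false_eq_true, if_false]
  ring

theorem exists_toSign_eq {z : ℤ} (hz : z = 1 ∨ z = -1) : ∃ e, toSign e = z :=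
  hz.elim (fun h => ⟨true, h.symm⟩) (fun h => ⟨false, h.symm⟩)

theorem toSign_injective : Function.Injective toSign := by
  decide

section Omega

variable {t : ℕ} {ν : ℝ} {τ : Fin t} {A B : Set (Omega t)}

open Classical in
theorem prob_eq_sum_sum (ν : ℝ) (A : Set (Omega t)) :
    prob ν A = ∑ b, 1 / 2 * ∑ f : Fin t → Bool × Bool,
      (if (b, f) ∈ A then 1 else 0) * ∏ j, periodWeight ν (f j) := by
  simp only [prob, Fintype.sum_prod_type, Finset.mul_sum, Set.indicator_apply, weight,
    periodWeight, ite_mul, one_mul, zero_mul, mul_ite, mul_zero]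

theorem IgnoresPeriod.inter (hA : IgnoresPeriod τ A) (hB : IgnoresPeriod τ B) :
    IgnoresPeriod τ (A ∩ B) :=
  fun b _ _ h => congrArg₂ And (hA b h) (hB b h)

theorem IgnoresPeriod.prob_inter_period (hA : IgnoresPeriod τ A) (ν : ℝ) (p : Bool × Bool) :
    prob ν (A ∩ {ω | ω.2 τ = p}) = periodWeight ν p * prob ν A := by
  classical
  rw [prob_eq_sum_sum, prob_eq_sum_sum, Finset.mul_sum]
  refine Fintype.sum_congr _ _ fun b => ?_
  have hdep : DependsOn (fun f => if (b, f) ∈ A then (1 : ℝ) else 0) {τ}ᶜ :=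
    fun f f' h => by simp only [hA b h]
  have hindep := sum_mul_mul_prod_of_dependsOn (w := fun _ => periodWeight ν)
    (sum_periodWeight ν) hdep fun x => if x = p then 1 else 0
  simp only [ite_mul, one_mul, zero_mul, Finset.sum_ite_eq', Finset.mem_univ, if_true] at hindep
  rw [mul_left_comm]
  simp only [Set.mem_inter_iff, Set.mem_ofPred_eq, and_comm, ite_and, ite_mul, one_mul, zero_mul,
    hindep]

theorem IgnoresPeriod.condProb_inter_period (hA : IgnoresPeriod τ A) (hB : IgnoresPeriod τ B)
    {p : Bool × Bool} (hp : periodWeight ν p ≠ 0) :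
    condProb ν A (B ∩ {ω | ω.2 τ = p}) = condProb ν A B := by
  rw [condProb, ← Set.inter_assoc, (hA.inter hB).prob_inter_period, hB.prob_inter_period,
    mul_div_mul_left _ _ hp, condProb]

theorem ignoresPeriod_setOf_stateVal (τ : Fin t) (z : ℤ) : IgnoresPeriod τ {ω | stateVal ω = z} :=
  fun _ _ _ _ => rfl

theorem ignoresPeriod_setOf_obsVal (τ : Fin t) (σ : Fin t → ℤ) :
    IgnoresPeriod τ {ω | ∀ j, j ≠ τ → obsVal j ω = σ j} := by
  intro b f f' h
  refine propext (forall₂_congr fun j hj => ?_)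
  simp only [obsVal, h j hj]

theorem setOf_obsVal_inter_setOf_noiseVal {σ : Fin t → ℤ} {e : Bool} (he : toSign e = σ τ) :
    {ω : Omega t | ∀ j, obsVal j ω = σ j} ∩ {ω | noiseVal τ ω = true}
      = {ω | ∀ j, j ≠ τ → obsVal j ω = σ j} ∩ {ω | ω.2 τ = (true, e)} := by
  ext ω
  have hτ (hn : noiseVal τ ω = true) : obsVal τ ω = σ τ ↔ (ω.2 τ).2 = e := by
    rw [obsVal, if_pos (show (ω.2 τ).1 = true from hn), ← he, toSign_injective.eq_iff]
  constructor
  · rintro ⟨hobs, hn⟩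
    exact ⟨fun j _ => hobs j, Prod.ext hn ((hτ hn).1 (hobs τ))⟩
  · rintro ⟨hobs, hp⟩
    have hn : noiseVal τ ω = true := congrArg Prod.fst hp
    refine ⟨fun j => ?_, hn⟩
    obtain rfl | hj := eq_or_ne j τ
    · exact (hτ hn).2 (congrArg Prod.snd hp)
    · exact hobs j hj

end Omega

/-- **Verifying retractions are equivalent to deletion for a Bayesian.** In the
truth-or-noise model, for every realization `(σ₁,…,σ_t) ∈ {−1,1}^t` and every
`τ ∈ {1,…,t}`,
`P(θ = 1 | s₁ = σ₁,…,s_t = σ_t, n_τ = 1) = P(θ = 1 | s_j = σ_j for all j ≠ τ)`: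
conditioning additionally on observation `τ` being noise yields exactly the
posterior computed from the history with the retracted observation removed. -/
theorem retraction_equals_deletion_bayesian
    (t : ℕ) (ν : ℝ) (hν : ν ∈ Set.Ioo (0:ℝ) 1)
    (σ : Fin t → ℤ) (hσ : ∀ j, σ j = 1 ∨ σ j = -1) (τ : Fin t) :
    condProb ν {ω : Omega t | stateVal ω = 1}
        ({ω : Omega t | ∀ j : Fin t, obsVal j ω = σ j}
          ∩ {ω : Omega t | noiseVal τ ω = true})
      = condProb ν {ω : Omega t | stateVal ω = 1}
          {ω : Omega t | ∀ j : Fin t, j ≠ τ → obsVal j ω = σ j} := by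
  obtain ⟨e, he⟩ := exists_toSign_eq (hσ τ)
  have hpos : 0 < periodWeight ν (true, e) := mul_pos hν.1 one_half_pos
  rw [setOf_obsVal_inter_setOf_noiseVal he]
  exact (ignoresPeriod_setOf_stateVal τ 1).condProb_inter_period
    (ignoresPeriod_setOf_obsVal τ σ) hpos.ne'
end

section
/- A verifying retraction is equivalent to an opposite new observation for a Bayesian: in the truth-or-noise model with t+1 potential observations, for every realization (σ₁,…,σ_t) ∈ {−1,1}^t and every τ ∈ {1,…,t}, P(θ = 1 | s₁ = σ₁,…,s_t = σ_t, n_τ = 1) = P(θ = 1 | s₁ = σ₁,…,s_t = σ_t, s_{t+1} = −σ_τ). That is, retracting observation τ moves the Bayesian posterior exactly as would drawing one additional observation of the opposite color. -/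
/-!
A posterior depends on the evidence only through its likelihoods in the two states, up to a common
nonzero factor. Given `θ`, the pairs `(n_j, ε_j)` are independent, so both likelihoods are products
over periods, and they differ only in the factors of periods `τ` and `t + 1`:

* retraction: `P(s_τ = σ_τ, n_τ = 1 | θ) = ν / 2`, as a noisy observation ignores the state;
* new observation: `P(s_τ = σ_τ | θ) P(s_{t+1} = -σ_τ | θ) = (1 - ν / 2) (ν / 2)`, as exactly one of
  two opposite observations agrees with the state.

Neither depends on `θ`.
-/

open scoped BigOperators

section Posterior

variable {n : ℕ} {ν : ℝ}

lemma prob_eq_sum_prob_state_inter (A : Set (Omega n)) :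
    prob ν A = ∑ b, prob ν ({ω | ω.1 = b} ∩ A) := by
  classical
  simp only [prob]
  rw [Finset.sum_comm]
  refine Finset.sum_congr rfl fun ω _ => ?_
  simp [Set.indicator_apply, ite_and]

lemma condProb_state_eq_of_prob_state_inter_eq_mul {c : ℝ} (hc : c ≠ 0) {B C : Set (Omega n)}
    (h : ∀ b, prob ν ({ω | ω.1 = b} ∩ B) = c * prob ν ({ω | ω.1 = b} ∩ C)) (b : Bool) :
    condProb ν {ω | ω.1 = b} B = condProb ν {ω | ω.1 = b} C := by
  have h_total : prob ν B = c * prob ν C := by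
    simp only [prob_eq_sum_prob_state_inter B, prob_eq_sum_prob_state_inter C, h,
      Finset.mul_sum]
  rw [condProb, condProb, h, h_total, mul_div_mul_left _ _ hc]

end Posterior

section OnePeriod

variable (ν : ℝ)

/-- Mass of a single noise pair `(n, ε)`: the factor that one period contributes to `weight`. -/
noncomputable def pairWeight (x : Bool × Bool) : ℝ :=
  (if x.1 then ν else 1 - ν) * (1 / 2)

/-- Probability that the noise pair `(n, ε)` of a single period lies in `E`. -/
noncomputable def pairProb (E : Set (Bool × Bool)) : ℝ :=
  ∑ x, E.indicator (pairWeight ν) x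

/-- The noise pairs `(n, ε)` that produce the observation `v` when `θ` is encoded by the bit `b`. -/
def obsPairs (b : Bool) (v : ℤ) : Set (Bool × Bool) :=
  {x | (if x.1 then toSign x.2 else toSign b) = v}

lemma pairProb_univ : pairProb ν Set.univ = 1 := by
  simp only [pairProb, pairWeight, Fintype.sum_prod_type, Fintype.sum_bool, Set.indicator_univ]
  grind

lemma pairProb_obsPairs (b : Bool) {v : ℤ} (hv : v = 1 ∨ v = -1) :
    pairProb ν (obsPairs b v) = if v = toSign b then 1 - ν / 2 else ν / 2 := by
  simp only [pairProb, pairWeight, Fintype.sum_prod_type, Fintype.sum_bool, Set.indicator_apply,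
    obsPairs, toSign, Set.mem_ofPred_eq]
  grind

lemma pairProb_obsPairs_inter_noise (b : Bool) {v : ℤ} (hv : v = 1 ∨ v = -1) :
    pairProb ν (obsPairs b v ∩ {x | x.1 = true}) = ν / 2 := by
  simp only [pairProb, pairWeight, Fintype.sum_prod_type, Fintype.sum_bool, Set.indicator_apply,
    obsPairs, toSign, Set.mem_inter_iff, Set.mem_ofPred_eq]
  grind

lemma pairProb_obsPairs_mul_neg (b : Bool) {v : ℤ} (hv : v = 1 ∨ v = -1) :
    pairProb ν (obsPairs b v) * pairProb ν (obsPairs b (-v)) = (1 - ν / 2) * (ν / 2) := by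
  have hv_neg : -v = 1 ∨ -v = -1 := by omega
  rw [pairProb_obsPairs ν b hv, pairProb_obsPairs ν b hv_neg]
  rcases hv with rfl | rfl <;> cases b <;> simp [toSign, mul_comm]

end OnePeriod

section History

variable (ν : ℝ)

lemma prob_rectangle {n : ℕ} (b : Bool) (F : Fin n → Set (Bool × Bool)) :
    prob ν {ω | ω.1 = b ∧ ∀ j, ω.2 j ∈ F j} = 1 / 2 * ∏ j, pairProb ν (F j) := by
  classical
  calc
    _ = ∑ f : Fin n → Bool × Bool, if ∀ j, f j ∈ F j then weight ν (b, f) else 0 := by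
      simp [prob, Fintype.sum_prod_type, Set.indicator_apply, ite_and]
    _ = ∑ f : Fin n → Bool × Bool, 1 / 2 * ∏ j, (F j).indicator (pairWeight ν) (f j) := by
      simp [weight, pairWeight, Set.indicator_apply, Finset.prod_ite_zero]
    _ = 1 / 2 * ∏ j, pairProb ν (F j) := by
      simp only [pairProb, Finset.prod_univ_sum, Fintype.piFinset_univ, Finset.mul_sum]

variable {t : ℕ}

lemma prob_state_inter_history_inter (b : Bool) (σ : Fin t → ℤ) (τ : Fin t)
    (E E' : Bool → Set (Bool × Bool)) :
    prob ν ({ω : Omega (t + 1) | ω.1 = b} ∩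
        ({ω : Omega (t + 1) | ∀ j : Fin t, obsVal j.castSucc ω = σ j}
          ∩ {ω : Omega (t + 1) | ω.2 τ.castSucc ∈ E ω.1 ∧ ω.2 (Fin.last t) ∈ E' ω.1}))
      = 1 / 2 * (pairProb ν (obsPairs b (σ τ) ∩ E b) * pairProb ν (E' b)
          * ∏ j ∈ {τ}ᶜ, pairProb ν (obsPairs b (σ j))) := by
  let D (j : Fin t) : Set (Bool × Bool) := obsPairs b (σ j) ∩ {x | j = τ → x ∈ E b}
  have h_rectangle : {ω : Omega (t + 1) | ω.1 = b} ∩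
        ({ω : Omega (t + 1) | ∀ j : Fin t, obsVal j.castSucc ω = σ j}
          ∩ {ω : Omega (t + 1) | ω.2 τ.castSucc ∈ E ω.1 ∧ ω.2 (Fin.last t) ∈ E' ω.1})
      = {ω | ω.1 = b ∧ ∀ j, ω.2 j ∈ Fin.snoc (α := fun _ => Set (Bool × Bool)) D (E' b) j} := by
    ext ω
    refine and_congr_right fun (hω : ω.1 = b) => ?_
    simp [D, hω, obsVal, obsPairs, Fin.forall_fin_succ', forall_and, and_assoc]
  have h_ne : ∀ j ∈ ({τ}ᶜ : Finset (Fin t)), D j = obsPairs b (σ j) := fun j hj => by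
    simp_all [D]
  rw [h_rectangle, prob_rectangle, Fin.prod_univ_castSucc]
  simp only [Fin.snoc_castSucc, Fin.snoc_last]
  rw [Fintype.prod_eq_mul_prod_compl τ,
    Finset.prod_congr rfl fun j hj => congrArg (pairProb ν) (h_ne j hj)]
  simp only [D, forall_const, Set.ofPred_mem_eq]
  ring

lemma prob_state_inter_history_inter_noise (b : Bool) (σ : Fin t → ℤ) (τ : Fin t)
    (hστ : σ τ = 1 ∨ σ τ = -1) :
    prob ν ({ω : Omega (t + 1) | ω.1 = b} ∩
        ({ω : Omega (t + 1) | ∀ j : Fin t, obsVal j.castSucc ω = σ j}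
          ∩ {ω : Omega (t + 1) | noiseVal τ.castSucc ω = true}))
      = 1 / 2 * (ν / 2 * ∏ j ∈ {τ}ᶜ, pairProb ν (obsPairs b (σ j))) := by
  have h := prob_state_inter_history_inter ν b σ τ (fun _ => {x | x.1 = true}) fun _ => Set.univ
  rw [pairProb_obsPairs_inter_noise ν b hστ, pairProb_univ, mul_one] at h
  simpa [noiseVal] using h

lemma prob_state_inter_history_inter_opposite (b : Bool) (σ : Fin t → ℤ) (τ : Fin t)
    (hστ : σ τ = 1 ∨ σ τ = -1) :
    prob ν ({ω : Omega (t + 1) | ω.1 = b} ∩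
        ({ω : Omega (t + 1) | ∀ j : Fin t, obsVal j.castSucc ω = σ j}
          ∩ {ω : Omega (t + 1) | obsVal (Fin.last t) ω = -σ τ}))
      = 1 / 2 * ((1 - ν / 2) * (ν / 2) * ∏ j ∈ {τ}ᶜ, pairProb ν (obsPairs b (σ j))) := by
  have h := prob_state_inter_history_inter ν b σ τ (fun _ => Set.univ) fun b => obsPairs b (-σ τ)
  rw [Set.inter_univ, pairProb_obsPairs_mul_neg ν b hστ] at h
  simpa [obsVal, obsPairs] using h

end History

/-- **A verifying retraction is equivalent to an opposite new observation for a
Bayesian.** In the truth-or-noise model with `t+1` potential observations, for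
every realization `(σ₁,…,σ_t) ∈ {−1,1}^t` and every `τ ∈ {1,…,t}`,
`P(θ = 1 | s₁ = σ₁,…,s_t = σ_t, n_τ = 1)
  = P(θ = 1 | s₁ = σ₁,…,s_t = σ_t, s_{t+1} = −σ_τ)`:
retracting observation `τ` moves the Bayesian posterior exactly as would
drawing one additional observation of the opposite color. -/
theorem retraction_equals_opposite_new_observation
    (t : ℕ) (ν : ℝ) (hν : ν ∈ Set.Ioo (0:ℝ) 1)
    (σ : Fin t → ℤ) (hσ : ∀ j, σ j = 1 ∨ σ j = -1) (τ : Fin t) :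
    condProb ν {ω : Omega (t + 1) | stateVal ω = 1}
        ({ω : Omega (t + 1) | ∀ j : Fin t, obsVal j.castSucc ω = σ j}
          ∩ {ω : Omega (t + 1) | noiseVal τ.castSucc ω = true})
      = condProb ν {ω : Omega (t + 1) | stateVal ω = 1}
          ({ω : Omega (t + 1) | ∀ j : Fin t, obsVal j.castSucc ω = σ j}
            ∩ {ω : Omega (t + 1) | obsVal (Fin.last t) ω = -σ τ}) := by
  have h_state : {ω : Omega (t + 1) | stateVal ω = 1} = {ω | ω.1 = true} := by
    ext ω
    cases h : ω.1 <;> simp [stateVal, toSign, h]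
  have h_factor : 1 - ν / 2 ≠ 0 := by linarith [hν.2]
  rw [h_state]
  refine (condProb_state_eq_of_prob_state_inter_eq_mul h_factor (fun b => ?_) true).symm
  rw [prob_state_inter_history_inter_opposite ν b σ τ (hσ τ),
    prob_state_inter_history_inter_noise ν b σ τ (hσ τ)]
  ring
end
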